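/- For every integer d ≥ 2 there exists a constant c > 0 such that for every δ > 0 there exists Q with the following property for every prime power q ≥ Q. Let S_p be a p-random subset of 𝔽_q^d (each point included independently with probability p). (a) If 0 ≤ p ≤ q^{−1/(d+1)}·(log q)², then the probability that S_p contains a general position set of size at least c·q^{d/(d+1)}·(log q)² is at most δ. (b) If q^{−1/(d+1)}·(log q)² ≤ p ≤ 1, then the probability that S_p contains a general position set of size at least c·p·q is at most δ. -/

import Mathlib

open scoped Classical

/-- A set `P ⊆ 𝔽_q^d` is in general position if every `(d+1)`-element subset of `P`
is affinely independent. -/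
def IsGenPos (F : Type*) [Field F] (d : ℕ) (P : Set (Fin d → F)) : Prop :=
  ∀ s : Finset (Fin d → F), (↑s : Set (Fin d → F)) ⊆ P → s.card = d + 1 →
    AffineIndependent F ((↑) : s → (Fin d → F))

/-- The probability, under the product Bernoulli distribution in which each point of the
finite ground set `V` is included independently with probability `p`, that the random
subset satisfies the event `E`. -/
noncomputable def bernoulliProb (V : Type*) [Fintype V] (p : ℝ)
    (E : Finset V → Prop) : ℝ :=
  ∑ S : Finset V,
    if E S then p ^ S.card * (1 - p) ^ (Fintype.card V - S.card) else 0

theorem kw_container {V : Type*} [Fintype V] [DecidableEq V] (Adj : V → V → Prop) (β : ℝ) (R : ℕ) (X : Finset V)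
    (hdeg : ∀ W : Finset V, W ⊆ X → R < W.card → ∃ v ∈ W, β * W.card ≤ ((W.erase v).filter (Adj v)).card)
    (f : ℕ) (W : Finset V) (hWX : W ⊆ X) (hW : (W.card : ℝ) * (1 - β) ^ f ≤ R) :
    ∃ cont : Finset V → Finset V, (∀ S, (cont S).card ≤ R) ∧
      ∀ I : Finset V, I ⊆ W → (∀ x ∈ I, ∀ y ∈ I, x ≠ y → ¬ Adj x y) →
        ∃ S ⊆ I, S.card ≤ f ∧ I ⊆ S ∪ cont S := by
  induction hn : W.card using Nat.strong_induction_on generalizing W f with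
  | _ n ih =>
    subst hn
    by_cases hle : W.card ≤ R
    · exact ⟨fun _ => W, fun _ => hle, fun I hI _ => ⟨∅, by simp, by simp, by simpa using hI⟩⟩
    · push Not at hle
      obtain ⟨v, hv, hdv⟩ := hdeg W hWX hle
      obtain _ | f := f
      · simp at hW; omega
      have hWpos : (0:ℝ) < W.card := by exact_mod_cast (Finset.card_pos.mpr ⟨v, hv⟩)
      have hβ1 : β ≤ 1 := by
        have h1 : (((W.erase v).filter (Adj v)).card : ℝ) ≤ W.card := by
          exact_mod_cast Finset.card_le_card ((Finset.filter_subset _ _).trans (Finset.erase_subset _ _))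
        by_contra hc
        push Not at hc
        nlinarith
      have hp : 0 ≤ (1 - β) ^ f := pow_nonneg (by linarith) _
      have hp' : 0 ≤ (1 - β) ^ (f+1) := pow_nonneg (by linarith) _
      obtain ⟨c1, hc1, h1⟩ := ih (W.erase v).card (Finset.card_erase_lt_of_mem hv) (f+1) (W.erase v)
        ((Finset.erase_subset _ _).trans hWX)
        (le_trans (mul_le_mul_of_nonneg_right (by exact_mod_cast Finset.card_le_card (Finset.erase_subset _ _)) hp') hW) rfl
      set W2 := (W.erase v).filter (fun y => ¬ Adj v y) with hW2
      have hcard : ((W.erase v).filter (Adj v)).card + W2.card = (W.erase v).card :=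
        Finset.card_filter_add_card_filter_not (s := W.erase v) (Adj v)
      have hlt := Finset.card_erase_lt_of_mem hv
      have hW2sub : W2 ⊆ W := (Finset.filter_subset _ _).trans (Finset.erase_subset _ _)
      have hW2c : (W2.card : ℝ) ≤ (1 - β) * W.card := by
        have : (((W.erase v).filter (Adj v)).card : ℝ) + W2.card ≤ W.card := by
          exact_mod_cast (by omega)
        linarith
      obtain ⟨c2, hc2, h2⟩ := ih W2.card (by omega) f W2 (hW2sub.trans hWX)
        (by
          refine le_trans (mul_le_mul_of_nonneg_right hW2c hp) ?_
          rw [pow_succ] at hW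
          linarith) rfl
      refine ⟨fun S => if v ∈ S then c2 (S.erase v) else c1 S, ?_, ?_⟩
      · intro S
        dsimp only
        split_ifs
        · exact hc2 _
        · exact hc1 _
      · intro I hI hind
        by_cases hvI : v ∈ I
        · obtain ⟨S, hS, hSc, hIS⟩ := h2 (I.erase v) (by
            intro y hy
            rw [Finset.mem_erase] at hy
            rw [hW2, Finset.mem_filter, Finset.mem_erase]
            exact ⟨⟨hy.1, hI hy.2⟩, hind v hvI y hy.2 (Ne.symm hy.1)⟩)
            (fun x hx y hy => hind x (Finset.mem_of_mem_erase hx) y (Finset.mem_of_mem_erase hy))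
          have hvS : v ∉ S := fun h => by simpa using hS h
          refine ⟨insert v S, ?_, ?_, ?_⟩
          · intro y hy
            rcases Finset.mem_insert.mp hy with rfl | hy
            · exact hvI
            · exact Finset.mem_of_mem_erase (hS hy)
          · rw [Finset.card_insert_of_notMem hvS]; omega
          · intro y hy
            by_cases hyv : y = v
            · simp [hyv]
            · have := hIS (Finset.mem_erase.mpr ⟨hyv, hy⟩)
              simp only [Finset.mem_insert_self, if_true, Finset.erase_insert hvS]
              rcases Finset.mem_union.mp this with h | h
              · simp [h]
              · simp [h]
        · obtain ⟨S, hS, hSc, hIS⟩ := h1 I (by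
            intro y hy
            exact Finset.mem_erase.mpr ⟨fun h => hvI (h ▸ hy), hI hy⟩) hind
          refine ⟨S, hS, hSc, ?_⟩
          have hvS : v ∉ S := fun h => hvI (hS h)
          simpa [hvS] using hIS

theorem bern_superset {V : Type*} [Fintype V] (p : ℝ) (K : Finset V) :
    bernoulliProb V p (fun S => K ⊆ S) = p ^ K.card := by
  have h0 : bernoulliProb V p (fun S => K ⊆ S) = ∑ S ∈ Finset.univ.filter (fun S => K ⊆ S),
      p ^ S.card * (1 - p) ^ (Fintype.card V - S.card) := by
    unfold bernoulliProb
    rw [Finset.sum_filter]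
    refine Finset.sum_congr rfl fun S _ => ?_
    congr
  rw [h0]
  trans ∑ S ∈ Kᶜ.powerset, p ^ K.card * (p ^ S.card * (1 - p) ^ (Kᶜ.card - S.card))
  · refine Finset.sum_bij' (fun S _ => S \ K) (fun S _ => S ∪ K) ?_ ?_ ?_ ?_ ?_
    · intro S hS
      simp only [Finset.mem_powerset]
      intro x hx
      simp at hx ⊢
      exact hx.2
    · intro S hS
      simp
    · intro S hS
      simp only [Finset.mem_filter, Finset.mem_univ, true_and] at hS
      exact Finset.sdiff_union_of_subset hS
    · intro S hS
      simp only [Finset.mem_powerset] at hS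
      ext x
      have := @hS x
      simp at this ⊢
      tauto
    · intro S hS
      simp only [Finset.mem_filter, Finset.mem_univ, true_and] at hS
      have h1 := Finset.card_sdiff_add_card_eq_card hS
      have h2 := Finset.card_compl K
      have h3 := Finset.card_le_univ S
      rw [← mul_assoc, ← pow_add]
      congr 2
      · omega
      · omega
  · rw [← Finset.mul_sum, Finset.sum_pow_mul_eq_add_pow]
    simp

theorem bern_union {V ι : Type*} [Fintype V] (p : ℝ) (hp0 : 0 ≤ p) (hp1 : p ≤ 1)
    (E : Finset V → Prop) (s : Finset ι) (E' : ι → Finset V → Prop)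
    (h : ∀ S, E S → ∃ i ∈ s, E' i S) :
    bernoulliProb V p E ≤ ∑ i ∈ s, bernoulliProb V p (E' i) := by
  unfold bernoulliProb
  rw [Finset.sum_comm]
  refine Finset.sum_le_sum fun S _ => ?_
  have hw : 0 ≤ p ^ S.card * (1 - p) ^ (Fintype.card V - S.card) :=
    mul_nonneg (pow_nonneg hp0 _) (pow_nonneg (by linarith) _)
  have hn : ∀ i ∈ s, 0 ≤ (if E' i S then p ^ S.card * (1 - p) ^ (Fintype.card V - S.card) else 0) := by
    intro i _
    split_ifs
    · exact hw
    · exact le_rfl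
  split_ifs with hE
  · obtain ⟨i, hi, hEi⟩ := h S hE
    refine le_trans ?_ (Finset.single_le_sum hn hi)
    rw [if_pos hEi]
  · exact Finset.sum_nonneg hn

theorem bern_inter {V : Type*} [Fintype V] [DecidableEq V] (p : ℝ) (hp0 : 0 ≤ p) (hp1 : p ≤ 1)
    (C : Finset V) (k : ℕ) :
    bernoulliProb V p (fun S => k ≤ (S ∩ C).card) ≤ (C.card.choose k) * p ^ k := by
  refine le_trans (bern_union p hp0 hp1 _ (C.powersetCard k) (fun K S => K ⊆ S) ?_) ?_
  · intro S hS
    obtain ⟨K, hK, hKc⟩ := Finset.exists_subset_card_eq hS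
    exact ⟨K, Finset.mem_powersetCard.mpr ⟨hK.trans Finset.inter_subset_right, hKc⟩,
      hK.trans Finset.inter_subset_left⟩
  · rw [Finset.sum_congr rfl (g := fun _ => p ^ k)]
    · simp
    · intro K hK
      rw [bern_superset, (Finset.mem_powersetCard.mp hK).2]

theorem card_small_le (V : Type*) [Fintype V] (f : ℕ) :
    (Finset.univ.filter (fun S : Finset V => S.card ≤ f)).card ≤ (Fintype.card V + 1) ^ f := by
  have : (Finset.univ.filter (fun S : Finset V => S.card ≤ f)) ⊆
      (Finset.univ : Finset (Fin f → Option V)).image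
        (fun g => Finset.univ.filter (fun v => ∃ i, g i = some v)) := by
    intro S hS
    simp only [Finset.mem_filter, Finset.mem_univ, true_and] at hS
    simp only [Finset.mem_image, Finset.mem_univ, true_and]
    let e := S.equivFin
    refine ⟨fun i => if h : i.1 < S.card then some (e.symm ⟨i.1, h⟩ : V) else none, ?_⟩
    ext v
    simp only [Finset.mem_filter, Finset.mem_univ, true_and]
    constructor
    · rintro ⟨i, hi⟩
      split_ifs at hi with h
      simp only [Option.some.injEq] at hi
      rw [← hi]
      exact (e.symm _).2
    · intro hv
      have hlt := (e ⟨v, hv⟩).2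
      refine ⟨⟨(e ⟨v, hv⟩).1, by omega⟩, ?_⟩
      simp [hlt]
  refine (Finset.card_le_card this).trans (Finset.card_image_le.trans ?_)
  simp

/-- Affine independence of a finite set of points. -/
def AI {F : Type*} [Field F] {d : ℕ} (X : Finset (Fin d → F)) : Prop :=
  AffineIndependent F ((↑) : X → (Fin d → F))

theorem AI.subset {F : Type*} [Field F] {d : ℕ} {X Y : Finset (Fin d → F)} (h : AI Y) (hXY : X ⊆ Y) :
    AI X := by
  have h' : AffineIndependent F ((↑) : (↑Y : Set (Fin d → F)) → (Fin d → F)) := h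
  exact h'.mono (s := (↑X : Set (Fin d → F))) (by exact_mod_cast hXY)

theorem genpos_AI {F : Type*} [Field F] {d : ℕ} {I X : Finset (Fin d → F)}
    (hI : IsGenPos F d ↑I) (hc : d + 1 ≤ I.card) (hX : X ⊆ I) (hXc : X.card ≤ d + 1) : AI X := by
  obtain ⟨Y, hXY, hYI, hY⟩ := Finset.exists_subsuperset_card_eq hX hXc hc
  exact AI.subset (hI Y (by exact_mod_cast hYI) hY) hXY

theorem mem_span_of_not_AI {F : Type*} [Field F] {d : ℕ} {X : Finset (Fin d → F)} {p : Fin d → F}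
    (hX : AI X) (hp : ¬ AI (insert p X)) : p ∈ affineSpan F (↑X : Set (Fin d → F)) := by
  by_contra hcon
  apply hp
  have hpX : p ∉ X := fun h => hcon (subset_affineSpan F _ (by exact_mod_cast h))
  let i : (insert p X : Finset (Fin d → F)) := ⟨p, Finset.mem_insert_self _ _⟩
  have key := AffineIndependent.affineIndependent_of_notMem_span (k := F)
    (p := ((↑) : ↥(insert p X) → (Fin d → F))) (i := i)
  apply key
  · let e : {y : (insert p X : Finset (Fin d → F)) // y ≠ i} ↪ X :=
      ⟨fun y => ⟨y.1.1, by
        have h1 := y.1.2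
        have h2 := y.2
        rcases Finset.mem_insert.mp h1 with h | h
        · exact absurd (Subtype.ext h) h2
        · exact h⟩, by
        intro a b hab
        simp only [Subtype.mk.injEq] at hab
        exact Subtype.ext (Subtype.ext hab)⟩
    exact AffineIndependent.comp_embedding e hX
  · intro hmem
    apply hcon
    refine affineSpan_mono F ?_ hmem
    rintro _ ⟨y, hy, rfl⟩
    rcases Finset.mem_insert.mp y.2 with h | h
    · exact absurd (Subtype.ext h) hy
    · exact_mod_cast h

theorem mult_le_two {F : Type*} [Field F] {d : ℕ} {A B : Finset (Fin d → F)} {x y : Fin d → F}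
    (hA : ∀ X ⊆ A, X.card ≤ d + 1 → AI X) (hB : B ⊆ A) (hBc : B.card + 2 ≤ d)
    (hxy : AI (insert x (insert y B))) :
    ((A \ B).filter (fun p => ¬ AI (insert x (insert y (insert p B))))).card ≤ 2 := by
  by_contra hcon
  push Not at hcon
  obtain ⟨P, hP, hPc⟩ := Finset.exists_subset_card_eq (show 3 ≤ _ from hcon)
  have hPA : P ⊆ A := fun p hp => (Finset.mem_sdiff.mp (Finset.mem_filter.mp (hP hp)).1).1
  have hdis : Disjoint B P := by
    rw [Finset.disjoint_left]
    intro b hb hbP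
    exact (Finset.mem_sdiff.mp (Finset.mem_filter.mp (hP hbP)).1).2 hb
  have hcard : (B ∪ P).card = B.card + 3 := by rw [Finset.card_union_of_disjoint hdis, hPc]
  have hAI : AI (B ∪ P) := hA _ (Finset.union_subset hB hPA) (by omega)
  have := AffineIndependent.card_le_card_of_subset_affineSpan (t := insert x (insert y B)) hAI (by
    intro z hz
    rcases Finset.mem_union.mp (Finset.mem_coe.mp hz) with h | h
    · apply subset_affineSpan
      simp [h]
    · apply mem_span_of_not_AI hxy
      have := (Finset.mem_filter.mp (hP h)).2
      rwa [Finset.insert_comm z x, Finset.insert_comm z y])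
  have h2 := Finset.card_le_two (a := x) (b := y)
  have h3 := Finset.card_insert_le x (insert y B)
  have h4 := Finset.card_insert_le y B
  omega

theorem exists_class {F : Type*} [Field F] {d : ℕ} (T : Finset (Fin d → F)) (hT : T.card + 1 = d) :
    ∃ cl : (Fin d → F) → Option F, ∀ x y, x ≠ y → x ∉ T → y ∉ T → cl x = cl y →
      ¬ AI (insert x (insert y T)) := by
  let Φ : ((Fin d → F) × F) →ₗ[F] (T → F) :=
    { toFun := fun u t => u.1 ⬝ᵥ t.1 + u.2
      map_add' := by intro u v; ext t; simp [add_dotProduct]; ring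
      map_smul' := by intro c u; ext t; simp [smul_dotProduct]; ring }
  have hrank := Φ.finrank_range_add_finrank_ker
  have h1 : Module.finrank F Φ.range ≤ T.card := by
    have := Submodule.finrank_le Φ.range
    simpa using this
  have h2 : Module.finrank F ((Fin d → F) × F) = d + 1 := by simp
  have h3 : 2 ≤ Module.finrank F Φ.ker := by omega
  obtain ⟨g, hg⟩ := exists_linearIndependent_of_le_finrank h3
  let ev : (Fin d → F) × F → (Fin d → F) → F := fun u x => u.1 ⬝ᵥ x + u.2
  refine ⟨fun x => if ev (g 1) x = 0 then none else some (ev (g 0) x / ev (g 1) x), ?_⟩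
  intro x y hxy hx hy hcl hAI
  -- a nonzero functional vanishing on everything
  have hcomb : ∃ u : Φ.ker, u ≠ 0 ∧ ev u x = 0 ∧ ev u y = 0 := by
    dsimp only at hcl
    split_ifs at hcl with hx1 hy1 hy1
    · exact ⟨g 1, hg.ne_zero 1, hx1, hy1⟩
    · simp only [Option.some.injEq] at hcl
      refine ⟨g 0 - (ev (g 0) x / ev (g 1) x) • g 1, ?_, ?_, ?_⟩
      · intro h0
        have := (LinearIndependent.pair_iff.mp (show LinearIndependent F ![g 0, g 1] by
          convert hg using 1
          funext i; fin_cases i <;> rfl)) 1 (-(ev (g 0) x / ev (g 1) x)) (by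
            rw [one_smul, neg_smul, ← sub_eq_add_neg]; exact h0)
        exact one_ne_zero this.1
      · have : ∀ (c : F) z, ev ((g 0 - c • g 1 : Φ.ker) : (Fin d → F) × F) z
            = ev (g 0) z - c * ev (g 1) z := by
          intro c z; simp [ev, sub_dotProduct, smul_dotProduct]; ring
        rw [this]; field_simp; ring
      · have : ∀ (c : F) z, ev ((g 0 - c • g 1 : Φ.ker) : (Fin d → F) × F) z
            = ev (g 0) z - c * ev (g 1) z := by
          intro c z; simp [ev, sub_dotProduct, smul_dotProduct]; ring
        rw [this, hcl]; field_simp; ring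
  obtain ⟨u, hu0, hux, huy⟩ := hcomb
  have hker : ∀ t ∈ T, ev u t = 0 := fun t ht => congrFun (LinearMap.mem_ker.mp u.2) ⟨t, ht⟩
  have hcardX : (insert x (insert y T)).card = d + 1 := by
    rw [Finset.card_insert_of_notMem (by simp [hxy, hx]), Finset.card_insert_of_notMem hy]; omega
  have htop : affineSpan F (↑(insert x (insert y T)) : Set (Fin d → F)) = ⊤ := by
    have h := (AffineIndependent.affineSpan_eq_top_iff_card_eq_finrank_add_one hAI).mpr (by
      rw [Fintype.card_coe, hcardX]; simp)
    rw [Subtype.range_coe_subtype] at h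
    exact h
  let fa : (Fin d → F) →ᵃ[F] F :=
    (dotProductBilin F F u.1.1).toAffineMap + AffineMap.const F (Fin d → F) u.1.2
  have hfa : ∀ z, fa z = ev u z := fun z => rfl
  have hz : fa = AffineMap.const F (Fin d → F) 0 := by
    refine AffineMap.ext_on htop ?_
    intro z hz
    have hz' : z = x ∨ z = y ∨ z ∈ T := by simpa using hz
    rw [hfa]
    rcases hz' with rfl | rfl | h
    · exact hux
    · exact huy
    · exact hker z h
  have hall : ∀ z, ev u z = 0 := fun z => by rw [← hfa, hz]; rfl
  apply hu0
  have hb : u.1.2 = 0 := by simpa [ev] using hall 0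
  have ha : u.1.1 = 0 := by
    ext i
    have := hall (Pi.single i 1)
    simpa [ev, hb] using this
  exact Subtype.ext (Prod.ext ha hb)

/-- Ordered pairs of distinct points of `W` that are affinely dependent together with `T`. -/
noncomputable def DP {F : Type*} [Field F] {d : ℕ} (T W : Finset (Fin d → F)) :
    Finset ((Fin d → F) × (Fin d → F)) :=
  W.offDiag.filter (fun z => ¬ AI (insert z.1 (insert z.2 T)))

/-- The auxiliary graph attached to a set `A`. -/
def GA {F : Type*} [Field F] {d : ℕ} (A : Finset (Fin d → F)) (x y : Fin d → F) : Prop :=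
  ∃ T ⊆ A, T.card + 1 ≤ d ∧ ¬ AI (insert x (insert y T))

theorem DP_base {F : Type*} [Field F] [Fintype F] {d : ℕ} (T W : Finset (Fin d → F))
    (hT : T.card + 1 = d) (hd : Disjoint W T) :
    W.card ^ 2 ≤ (Fintype.card F + 1) * ((DP T W).card + W.card) := by
  obtain ⟨cl, hcl⟩ := exists_class T hT
  have h1 : W.card = ∑ c : Option F, (W.filter (fun x => cl x = c)).card :=
    Finset.card_eq_sum_card_fiberwise (fun _ _ => Finset.mem_coe.mpr (Finset.mem_univ _))
  have h2 : (∑ c : Option F, (W.filter (fun x => cl x = c)).card) ^ 2 ≤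
      (Finset.univ : Finset (Option F)).card * ∑ c : Option F, (W.filter (fun x => cl x = c)).card ^ 2 :=
    sq_sum_le_card_mul_sum_sq
  rw [← h1, Finset.card_univ, Fintype.card_option] at h2
  refine h2.trans (Nat.mul_le_mul_left _ ?_)
  have h3 : ∑ c : Option F, (W.filter (fun x => cl x = c)).card ^ 2
      = ((W ×ˢ W).filter (fun z => cl z.1 = cl z.2)).card := by
    rw [Finset.card_eq_sum_card_fiberwise (f := fun z => cl z.1) (t := Finset.univ)
      (fun _ _ => Finset.mem_coe.mpr (Finset.mem_univ _))]
    refine Finset.sum_congr rfl fun c _ => ?_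
    rw [sq, ← Finset.card_product]
    congr 1
    ext z
    simp only [Finset.mem_product, Finset.mem_filter]
    constructor
    · rintro ⟨⟨a, b⟩, c, e⟩
      exact ⟨⟨⟨a, c⟩, b.trans e.symm⟩, b⟩
    · rintro ⟨⟨⟨a, c⟩, b⟩, e⟩
      exact ⟨⟨a, e⟩, c, b.symm.trans e⟩
  rw [h3, ← Finset.diag_card W]
  refine (Finset.card_le_card ?_).trans (Finset.card_union_le _ _)
  intro z hz
  simp only [Finset.mem_filter, Finset.mem_product] at hz
  rw [Finset.mem_union]
  by_cases hne : z.1 = z.2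
  · right
    rw [Finset.mem_diag]
    exact ⟨hz.1.1, hne⟩
  · left
    rw [DP, Finset.mem_filter, Finset.mem_offDiag]
    exact ⟨⟨hz.1.1, hz.1.2, hne⟩, hcl _ _ hne (Finset.disjoint_left.mp hd hz.1.1)
      (Finset.disjoint_left.mp hd hz.1.2) hz.2⟩

theorem DP_step {F : Type*} [Field F] {d : ℕ} {A B W : Finset (Fin d → F)}
    (hA : ∀ X ⊆ A, X.card ≤ d + 1 → AI X) (hB : B ⊆ A) (hBc : B.card + 2 ≤ d) :
    ∑ p ∈ A \ B, (DP (insert p B) W).card ≤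
      (A \ B).card * (DP B W).card + 2 * (W.offDiag.filter (fun z => GA A z.1 z.2)).card := by
  simp only [DP, Finset.card_filter]
  rw [Finset.sum_comm, Finset.mul_sum, Finset.mul_sum, ← Finset.sum_add_distrib]
  refine Finset.sum_le_sum fun z _ => ?_
  rw [← Finset.card_filter]
  by_cases h : AI (insert z.1 (insert z.2 B))
  · have h2 := mult_le_two hA hB hBc h
    by_cases hg : GA A z.1 z.2
    · rw [if_pos hg]; omega
    · suffices ((A \ B).filter (fun p => ¬ AI (insert z.1 (insert z.2 (insert p B))))) = ∅ by
        rw [this]; simp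
      rw [Finset.filter_eq_empty_iff]
      intro p hp hn
      refine hg ⟨insert p B, ?_, ?_, hn⟩
      · exact Finset.insert_subset (Finset.mem_sdiff.mp hp).1 hB
      · have := Finset.card_insert_le p B
        omega
  · have := Finset.card_filter_le (A \ B) (fun p => ¬ AI (insert z.1 (insert z.2 (insert p B))))
    rw [if_pos h]; omega

theorem DP_empty {F : Type*} [Field F] {d : ℕ} (W : Finset (Fin d → F)) : DP ∅ W = ∅ := by
  rw [DP, Finset.filter_eq_empty_iff]
  rintro ⟨x, y⟩ hz hn
  rw [Finset.mem_offDiag] at hz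
  apply hz.2.2
  have hy : AI ({y} : Finset (Fin d → F)) := by
    unfold AI
    exact affineIndependent_of_subsingleton F _
  have := mem_span_of_not_AI hy (by simpa using hn)
  simpa using this

theorem GA_edges {F : Type*} [Field F] [Fintype F] {d : ℕ} (hd : 2 ≤ d) {A W : Finset (Fin d → F)} {a : ℕ}
    (ha : 0 < a) (hAc : A.card = a + d)
    (hA : ∀ X ⊆ A, X.card ≤ d + 1 → AI X) (hdis : Disjoint W A)
    (hW : 4 * Fintype.card F < W.card) :
    (a : ℝ) * W.card ^ 2 ≤ 4 * (Fintype.card F + 1) * d *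
      ((W.offDiag.filter (fun z => GA A z.1 z.2)).card : ℝ) := by
  set E : ℝ := ((W.offDiag.filter (fun z => GA A z.1 z.2)).card : ℝ) with hE
  set q : ℝ := (Fintype.card F : ℝ) with hq
  have hq1 : (1:ℝ) ≤ q := by
    rw [hq]; exact_mod_cast Fintype.card_pos
  have hWq : 4 * q < W.card := by rw [hq]; exact_mod_cast hW
  have haR : (0:ℝ) < a := by exact_mod_cast ha
  have hE0 : 0 ≤ E := by rw [hE]; positivity
  have key : ∀ j : ℕ, j + 1 ≤ d → ∀ B ⊆ A, B.card + 1 + j = d →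
      (W.card : ℝ) ^ 2 / (2 * (q + 1)) - 2 * j * E / a ≤ (DP B W).card := by
    intro j
    induction j with
    | zero =>
      intro _ B hB hBc
      have h := DP_base B W (by omega) (Finset.disjoint_of_subset_right hB hdis)
      have h' : (W.card : ℝ) ^ 2 ≤ (q + 1) * ((DP B W).card + W.card) := by
        rw [hq]; exact_mod_cast h
      have : (W.card : ℝ) ^ 2 / (2 * (q + 1)) ≤ (DP B W).card := by
        rw [div_le_iff₀ (by positivity)]
        nlinarith
      simpa using this
    | succ j ih =>
      intro hj B hB hBc
      have h := DP_step (W := W) hA hB (by omega)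
      have hsd : (A \ B).card = A.card - B.card := Finset.card_sdiff_of_subset hB
      have hsd' : a ≤ (A \ B).card := by omega
      have h' : (∑ p ∈ A \ B, ((DP (insert p B) W).card : ℝ)) ≤
          (A \ B).card * (DP B W).card + 2 * E := by
        rw [hE]; exact_mod_cast h
      have hlow : ((A \ B).card : ℝ) * ((W.card : ℝ) ^ 2 / (2 * (q + 1)) - 2 * j * E / a) ≤
          ∑ p ∈ A \ B, ((DP (insert p B) W).card : ℝ) := by
        rw [← nsmul_eq_mul]
        refine Finset.card_nsmul_le_sum _ _ _ fun p hp => ?_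
        rw [Finset.mem_sdiff] at hp
        refine ih (by omega) _ (Finset.insert_subset hp.1 hB) ?_
        rw [Finset.card_insert_of_notMem hp.2]; omega
      set n : ℝ := ((A \ B).card : ℝ) with hn
      have hna : (a:ℝ) ≤ n := by rw [hn]; exact_mod_cast hsd'
      have hn0 : 0 < n := lt_of_lt_of_le haR hna
      have h5 : (W.card : ℝ) ^ 2 / (2 * (q + 1)) - 2 * j * E / a ≤ (DP B W).card + 2 * E / n := by
        have := hlow.trans h'
        have h6 : n * ((DP B W).card + 2 * E / n) = n * (DP B W).card + 2 * E := by
          field_simp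
        rw [← h6] at this
        exact le_of_mul_le_mul_left this hn0
      have h7 : 2 * E / n ≤ 2 * E / a := by gcongr
      have h8 : 2 * ((j + 1 : ℕ) : ℝ) * E / a = 2 * j * E / a + 2 * E / a := by
        push_cast; ring
      rw [h8]; linarith
  have h := key (d - 1) (by omega) ∅ (by simp) (by simp; omega)
  rw [DP_empty] at h
  simp only [Finset.card_empty, Nat.cast_zero] at h
  have hd1 : ((d - 1 : ℕ) : ℝ) ≤ d := by exact_mod_cast Nat.sub_le _ _
  have h2 : (W.card : ℝ) ^ 2 / (2 * (q + 1)) ≤ 2 * d * E / a := by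
    have : 2 * ((d - 1 : ℕ) : ℝ) * E / a ≤ 2 * d * E / a := by gcongr
    linarith
  rw [div_le_div_iff₀ (by positivity) haR] at h2
  linarith

theorem GA_deg {F : Type*} [Field F] [Fintype F] {d : ℕ} (hd : 2 ≤ d) {A W : Finset (Fin d → F)} {a : ℕ}
    (ha : 0 < a) (hAc : A.card = a + d)
    (hA : ∀ X ⊆ A, X.card ≤ d + 1 → AI X) (hdis : Disjoint W A)
    (hW : 4 * Fintype.card F < W.card) :
    ∃ v ∈ W, (a : ℝ) / (4 * (Fintype.card F + 1) * d) * W.card ≤ ((W.erase v).filter (GA A v)).card := by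
  have h := GA_edges hd ha hAc hA hdis hW
  have hne : W.Nonempty := Finset.card_pos.mp (by omega)
  by_contra hcon
  push Not at hcon
  have hsum : (W.offDiag.filter (fun z => GA A z.1 z.2)).card
      = ∑ v ∈ W, ((W.erase v).filter (GA A v)).card := by
    rw [Finset.card_eq_sum_card_fiberwise (f := fun z => z.1) (t := W)]
    · refine Finset.sum_congr rfl fun v hv => ?_
      refine Finset.card_bij' (fun z _ => z.2) (fun y _ => (v, y)) ?_ ?_ ?_ ?_
      · rintro ⟨x, y⟩ hz
        simp only [Finset.mem_filter, Finset.mem_offDiag, Finset.mem_erase] at hz ⊢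
        obtain ⟨⟨⟨h1, h2, h3⟩, h4⟩, h5⟩ := hz
        subst h5
        exact ⟨⟨Ne.symm h3, h2⟩, h4⟩
      · intro y hy
        simp only [Finset.mem_filter, Finset.mem_offDiag, Finset.mem_erase] at hy ⊢
        exact ⟨⟨⟨hv, hy.1.2, Ne.symm hy.1.1⟩, hy.2⟩, trivial⟩
      · rintro ⟨x, y⟩ hz
        simp only [Finset.mem_filter] at hz
        simp [hz.2]
      · intro y hy
        rfl
    · intro z hz
      have hz' := Finset.mem_coe.mp hz
      rw [Finset.mem_filter, Finset.mem_offDiag] at hz'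
      exact Finset.mem_coe.mpr hz'.1.1
  have hlt : ((∑ v ∈ W, ((W.erase v).filter (GA A v)).card : ℕ) : ℝ) <
      ∑ v ∈ W, (a : ℝ) / (4 * (Fintype.card F + 1) * d) * W.card := by
    push_cast
    exact Finset.sum_lt_sum_of_nonempty hne hcon
  rw [← hsum, Finset.sum_const, nsmul_eq_mul] at hlt
  have hdpos : (0:ℝ) < 4 * (Fintype.card F + 1) * d := by
    have : (0:ℝ) < d := by exact_mod_cast (by omega)
    positivity
  have h3 := mul_lt_mul_of_pos_left hlt hdpos
  have h4 : 4 * ((Fintype.card F : ℝ) + 1) * d * (W.card * (a / (4 * (Fintype.card F + 1) * d) * W.card))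
      = a * W.card ^ 2 := by
    field_simp
  rw [h4] at h3
  linarith

theorem container_exists {F : Type*} [Field F] [Fintype F] {d : ℕ} (hd : 2 ≤ d) {a : ℕ} (ha : 0 < a) (f : ℕ)
    (h1 : (a : ℝ) / (4 * (Fintype.card F + 1) * d) ≤ 1)
    (hf : ((Fintype.card F : ℝ) ^ d) * (1 - (a : ℝ) / (4 * (Fintype.card F + 1) * d)) ^ f
      ≤ 4 * Fintype.card F) :
    ∃ cont : Finset (Fin d → F) → Finset (Fin d → F) → Finset (Fin d → F),
      (∀ A S, (cont A S).card ≤ 4 * Fintype.card F) ∧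
      ∀ I A : Finset (Fin d → F), IsGenPos F d ↑I → d + 1 ≤ I.card → A ⊆ I → A.card = a + d →
        ∃ S, S.card ≤ f ∧ I ⊆ A ∪ S ∪ cont A S := by
  have key : ∀ A : Finset (Fin d → F), ∃ cont : Finset (Fin d → F) → Finset (Fin d → F),
      (∀ S, (cont S).card ≤ 4 * Fintype.card F) ∧
      ∀ I : Finset (Fin d → F), IsGenPos F d ↑I → d + 1 ≤ I.card → A ⊆ I → A.card = a + d →
        ∃ S, S.card ≤ f ∧ I ⊆ A ∪ S ∪ cont S := by
    intro A
    by_cases hA : (∀ X ⊆ A, X.card ≤ d + 1 → AI X) ∧ A.card = a + d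
    · obtain ⟨hA, hAc⟩ := hA
      obtain ⟨cont, hc, hI⟩ := kw_container (GA A) ((a : ℝ) / (4 * (Fintype.card F + 1) * d))
        (4 * Fintype.card F) Aᶜ (fun W hW hWc => GA_deg hd ha hAc hA
          (Finset.disjoint_left.mpr fun x hx hxA => (Finset.mem_compl.mp (hW hx)) hxA) hWc)
        f Aᶜ (Finset.Subset.refl _) (by
          push_cast
          refine le_trans (mul_le_mul_of_nonneg_right ?_ (pow_nonneg (by linarith) _)) hf
          have : (Aᶜ).card ≤ Fintype.card F ^ d := by
            refine (Finset.card_le_univ _).trans ?_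
            simp
          exact_mod_cast this)
      refine ⟨cont, hc, ?_⟩
      intro I hgp hIc hAI _
      obtain ⟨S, _, hSc, hIS⟩ := hI (I \ A) (fun x hx => Finset.mem_compl.mpr (Finset.mem_sdiff.mp hx).2) (by
        rintro x hx y hy hxy ⟨T, hT, hTc, hn⟩
        apply hn
        rw [Finset.mem_sdiff] at hx hy
        refine genpos_AI hgp hIc ?_ ?_
        · exact Finset.insert_subset hx.1 (Finset.insert_subset hy.1 (hT.trans hAI))
        · have h3 := Finset.card_insert_le x (insert y T)
          have h4 := Finset.card_insert_le y T
          omega)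
      refine ⟨S, hSc, ?_⟩
      intro x hx
      by_cases hxA : x ∈ A
      · simp [hxA]
      · have := hIS (Finset.mem_sdiff.mpr ⟨hx, hxA⟩)
        rw [Finset.union_assoc]
        exact Finset.mem_union_right _ this
    · refine ⟨fun _ => ∅, by simp, ?_⟩
      intro I hgp hIc hAI hAc
      exact absurd ⟨fun X hX hXc => genpos_AI hgp hIc (hX.trans hAI) hXc, hAc⟩ hA
  choose cont hc hI using key
  exact ⟨cont, hc, fun I A h1 h2 h3 h4 => hI A I h1 h2 h3 h4⟩

theorem prob_bound {F : Type*} [Field F] [Fintype F] {d : ℕ} (hd : 2 ≤ d) {a : ℕ} (ha : 0 < a) (f k : ℕ)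
    (h1 : (a : ℝ) / (4 * (Fintype.card F + 1) * d) ≤ 1)
    (hf : ((Fintype.card F : ℝ) ^ d) * (1 - (a : ℝ) / (4 * (Fintype.card F + 1) * d)) ^ f
      ≤ 4 * Fintype.card F)
    (M p : ℝ) (hp0 : 0 ≤ p) (hp1 : p ≤ 1) (hM : ∀ n : ℕ, M ≤ n → a + d + f + k ≤ n) :
    bernoulliProb (Fin d → F) p (fun S => ∃ T : Finset (Fin d → F), T ⊆ S ∧ IsGenPos F d ↑T ∧
      M ≤ (T.card : ℝ)) ≤
    ((Fintype.card F : ℝ) ^ d + 1) ^ (a + d + f) * (((4 * Fintype.card F).choose k : ℝ) * p ^ k) := by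
  obtain ⟨cont, hc, hI⟩ := container_exists (F := F) hd ha f h1 hf
  set sm : ℕ → Finset (Finset (Fin d → F)) := fun n => Finset.univ.filter (fun S => S.card ≤ n) with hsm
  refine le_trans (bern_union p hp0 hp1 _ (sm (a + d) ×ˢ sm f)
    (fun z S => k ≤ (S ∩ cont z.1 z.2).card) ?_) ?_
  · rintro S ⟨T, hTS, hgp, hT⟩
    have hTc := hM _ hT
    obtain ⟨A, hA, hAc⟩ := Finset.exists_subset_card_eq (show a + d ≤ T.card by omega)
    obtain ⟨S', hS', hT'⟩ := hI T A hgp (by omega) hA hAc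
    refine ⟨(A, S'), ?_, ?_⟩
    · simp [hsm, hAc, hS']
    · dsimp only
      have hsub : T ⊆ (A ∪ S') ∪ (S ∩ cont A S') := by
        intro x hx
        rcases Finset.mem_union.mp (hT' hx) with h | h
        · exact Finset.mem_union_left _ h
        · exact Finset.mem_union_right _ (Finset.mem_inter.mpr ⟨hTS hx, h⟩)
      have h3 := Finset.card_le_card hsub
      have h4 := Finset.card_union_le (A ∪ S') (S ∩ cont A S')
      have h5 := Finset.card_union_le A S'
      omega
  · refine le_trans (Finset.sum_le_card_nsmul _ _ (((4 * Fintype.card F).choose k : ℝ) * p ^ k) ?_) ?_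
    · intro z _
      refine (bern_inter p hp0 hp1 _ _).trans ?_
      refine mul_le_mul_of_nonneg_right ?_ (pow_nonneg hp0 _)
      exact_mod_cast Nat.choose_le_choose k (hc _ _)
    · rw [nsmul_eq_mul]
      refine mul_le_mul_of_nonneg_right ?_ (by positivity)
      rw [Finset.card_product, pow_add]
      have h3 : ∀ n, (((sm n).card : ℕ) : ℝ) ≤ ((Fintype.card F : ℝ) ^ d + 1) ^ n := by
        intro n
        have := card_small_le (Fin d → F) n
        rw [Fintype.card_fun, Fintype.card_fin] at this
        exact_mod_cast this
      push_cast
      exact mul_le_mul (h3 _) (h3 _) (by positivity) (by positivity)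

theorem choose_bound (q k : ℕ) (p : ℝ) (hp0 : 0 ≤ p) (hk : 0 < k) (h : 50 * p * q ≤ k) :
    ((4 * q).choose k : ℝ) * p ^ k ≤ (1 / 4) ^ k := by
  have hkR : (0:ℝ) < k := by exact_mod_cast hk
  have hfac : (0:ℝ) < (k.factorial : ℝ) := by exact_mod_cast Nat.factorial_pos k
  have h1 : ((4 * q).choose k : ℝ) ≤ ((4 * q : ℕ) : ℝ) ^ k / k.factorial := Nat.choose_le_pow_div k (4 * q)
  have h2 : (k : ℝ) ^ k / k.factorial ≤ Real.exp k := Real.pow_div_factorial_le_exp _ hkR.le k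
  have h3 : Real.exp k = Real.exp 1 ^ k := by rw [← Real.exp_nat_mul, mul_one]
  have h4 : Real.exp 1 ≤ 3 := by linarith [Real.exp_one_lt_d9]
  have h5 : (4 * q * p : ℝ) ≤ (4 / 50) * k := by linarith
  calc ((4 * q).choose k : ℝ) * p ^ k ≤ ((4 * q : ℕ) : ℝ) ^ k / k.factorial * p ^ k :=
        mul_le_mul_of_nonneg_right h1 (pow_nonneg hp0 _)
    _ = (4 * q * p : ℝ) ^ k / k.factorial := by push_cast; rw [mul_pow (4 * (q:ℝ)) p]; ring
    _ ≤ ((4 / 50) * k) ^ k / k.factorial := by gcongr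
    _ = (4 / 50) ^ k * ((k : ℝ) ^ k / k.factorial) := by rw [mul_pow]; ring
    _ ≤ (4 / 50) ^ k * 3 ^ k := by
        refine mul_le_mul_of_nonneg_left (h2.trans ?_) (by positivity)
        rw [h3]
        gcongr
    _ = (12 / 50) ^ k := by rw [← mul_pow]; norm_num
    _ ≤ (1 / 4) ^ k := pow_le_pow_left₀ (by norm_num) (by norm_num) k

theorem growth (C L : ℝ) : ∀ᶠ q : ℕ in Filter.atTop, 3 ≤ q ∧
    C * ((q : ℝ) ^ (1 / 2 : ℝ) * Real.log q ^ 2) ≤ (q : ℝ) ^ (2 / 3 : ℝ) ∧ L ≤ (q : ℝ) ^ (2 / 3 : ℝ) := by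
  have h1 := (isLittleO_log_rpow_rpow_atTop (s := 1 / 6) 2 (by norm_num)).bound
    (show (0:ℝ) < 1 / (|C| + 1) by positivity)
  have h2 := tendsto_rpow_atTop (show (0:ℝ) < 2 / 3 by norm_num)
  have h1' := tendsto_natCast_atTop_atTop (R := ℝ) |>.eventually h1
  have h2' := (h2.comp (tendsto_natCast_atTop_atTop (R := ℝ))).eventually_ge_atTop L
  filter_upwards [h1', h2', Filter.eventually_ge_atTop 3] with q hq1 hq2 hq3
  refine ⟨hq3, ?_, hq2⟩
  have hqpos : (0:ℝ) < q := by exact_mod_cast (by omega)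
  rw [Real.rpow_two, Real.norm_of_nonneg (sq_nonneg _), Real.norm_of_nonneg (by positivity)] at hq1
  have hC : 0 < |C| + 1 := by positivity
  have h3 : (|C| + 1) * Real.log q ^ 2 ≤ (q:ℝ) ^ (1 / 6 : ℝ) := by
    have := mul_le_mul_of_nonneg_left hq1 hC.le
    rwa [← mul_assoc, mul_one_div_cancel hC.ne', one_mul] at this
  have h4 : C * Real.log q ^ 2 ≤ (q:ℝ) ^ (1 / 6 : ℝ) := by
    refine le_trans (mul_le_mul_of_nonneg_right ?_ (sq_nonneg _)) h3
    linarith [le_abs_self C]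
  have h5 : (q:ℝ) ^ (2 / 3 : ℝ) = (q : ℝ) ^ (1 / 2 : ℝ) * (q:ℝ) ^ (1 / 6 : ℝ) := by
    rw [← Real.rpow_add hqpos]; norm_num
  rw [h5]
  have := mul_le_mul_of_nonneg_left h4 (show 0 ≤ (q : ℝ) ^ (1 / 2 : ℝ) by positivity)
  linarith

set_option maxHeartbeats 1000000 in
theorem main_bound (d : ℕ) (hd : 2 ≤ d) (δ : ℝ) (hδ : 0 < δ) : ∃ Q : ℕ, ∀ q : ℕ, Q ≤ q → 3 ≤ q ∧
      ∀ (F : Type) [Field F] [Fintype F], Fintype.card F = q →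
        ∀ p M : ℝ, 0 ≤ p → p ≤ 1 → 100 * p * q ≤ M → 100 * (q : ℝ) ^ (2 / 3 : ℝ) ≤ M →
          bernoulliProb (Fin d → F) p (fun S => ∃ T : Finset (Fin d → F), T ⊆ S ∧ IsGenPos F d ↑T ∧
            M ≤ (T.card : ℝ)) ≤ δ := by
  obtain ⟨n0, hn0⟩ := exists_pow_lt_of_lt_one hδ (show (1 / 2 : ℝ) < 1 by norm_num)
  obtain ⟨Q, hQ⟩ := Filter.eventually_atTop.mp
    (growth ((8 * (d:ℝ) ^ 2 + d + 4) * (d + 1)) n0)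
  refine ⟨Q, fun q hq => ?_⟩
  obtain ⟨hq3, hg, hL⟩ := hQ q hq
  refine ⟨hq3, ?_⟩
  intro F _ _ hF p M hp0 hp1 hM1 hM2
  have hqR : (3:ℝ) ≤ q := by exact_mod_cast hq3
  have hdR : (2:ℝ) ≤ d := by exact_mod_cast hd
  set r : ℝ := (q : ℝ) ^ (1 / 2 : ℝ) with hr
  have hr1 : 1 ≤ r := Real.one_le_rpow (by linarith) (by norm_num)
  set l : ℝ := Real.log q with hl
  have hl1 : 1 ≤ l := by
    rw [hl, Real.le_log_iff_exp_le (by linarith)]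
    linarith [Real.exp_one_lt_d9]
  set s : ℕ := Nat.sqrt q + 1 with hs
  have hs2 : q + 1 ≤ s * s := Nat.succ_le_succ_sqrt q
  have hsr : (s : ℝ) ≤ 2 * r := by
    have h1 : (Nat.sqrt q : ℝ) ≤ r := by
      rw [hr, ← Real.sqrt_eq_rpow]
      exact Real.nat_sqrt_le_real_sqrt
    rw [hs]; push_cast; linarith
  have hs1 : (1:ℝ) ≤ s := by rw [hs]; push_cast; linarith [Nat.cast_nonneg (α := ℝ) (Nat.sqrt q)]
  set f : ℕ := ⌈4 * (d:ℝ) ^ 2 * s * l⌉₊ with hfdef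
  have hf1 : 4 * (d:ℝ) ^ 2 * s * l ≤ f := Nat.le_ceil _
  have hf2 : (f:ℝ) < 4 * (d:ℝ) ^ 2 * s * l + 1 := Nat.ceil_lt_add_one (by positivity)
  set k : ℕ := ⌈M / 2⌉₊ with hk
  have hMpos : 0 < M := lt_of_lt_of_le (by positivity) hM2
  have hk1 : M / 2 ≤ k := Nat.le_ceil _
  have hk2 : (k:ℝ) < M / 2 + 1 := Nat.ceil_lt_add_one (by positivity)
  have hk0 : 0 < k := Nat.ceil_pos.mpr (by positivity)
  -- total fingerprint size
  have hrl : r ≤ r * l := by nlinarith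
  have htot : ((s:ℝ) + d + f + 1) ≤ (8 * (d:ℝ) ^ 2 + d + 4) * (r * l) := by
    have h1 : 4 * (d:ℝ) ^ 2 * s * l ≤ 8 * (d:ℝ) ^ 2 * (r * l) := by
      have : 4 * (d:ℝ) ^ 2 * s * l ≤ 4 * (d:ℝ) ^ 2 * (2 * r) * l := by gcongr
      linarith
    have h2 : (d:ℝ) ≤ d * (r * l) := by nlinarith
    nlinarith
  have htot2 : ((s:ℝ) + d + f + 1) * ((d + 1) * l) ≤ (q:ℝ) ^ (2 / 3 : ℝ) := by
    have := mul_le_mul_of_nonneg_right htot (show 0 ≤ (d + 1) * l by positivity)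
    refine this.trans (le_trans (le_of_eq ?_) hg)
    ring
  have htot3 : ((s:ℝ) + d + f + 1) ≤ (q:ℝ) ^ (2 / 3 : ℝ) := by
    refine le_trans ?_ htot2
    have h1 : 1 ≤ (d + 1) * l := by nlinarith
    have h2 : 0 ≤ ((s:ℝ) + d + f + 1) := by positivity
    nlinarith
  have hdpos : (0:ℝ) < 4 * ((q:ℝ) + 1) * d := by positivity
  have hβ1 : (s : ℝ) / (4 * (Fintype.card F + 1) * d) ≤ 1 := by
    rw [hF, div_le_one hdpos]
    have h1 : s ≤ q + 1 := by
      rw [hs]; have := Nat.sqrt_le_self q; omega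
    have h2 : (s:ℝ) ≤ q + 1 := by exact_mod_cast h1
    nlinarith
  have hβ2 : 1 / (4 * d * (s:ℝ)) ≤ (s : ℝ) / (4 * (Fintype.card F + 1) * d) := by
    rw [hF, div_le_div_iff₀ (by positivity) hdpos]
    have h2 : (q:ℝ) + 1 ≤ s * s := by exact_mod_cast hs2
    have h3 := mul_le_mul_of_nonneg_left h2 (show (0:ℝ) ≤ 4 * d by positivity)
    linarith
  have hf : ((Fintype.card F : ℝ) ^ d) * (1 - (s : ℝ) / (4 * (Fintype.card F + 1) * d)) ^ f
      ≤ 4 * Fintype.card F := by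
    set β := (s : ℝ) / (4 * (Fintype.card F + 1) * d) with hβ
    rw [hF]
    have h1 : (1 - β) ^ f ≤ Real.exp (-(d * l)) := by
      have h2 : (1 - β) ≤ Real.exp (-β) := by linarith [Real.add_one_le_exp (-β)]
      have h3 : (1 - β) ^ f ≤ Real.exp (-β) ^ f := pow_le_pow_left₀ (by linarith) h2 f
      refine h3.trans ?_
      rw [← Real.exp_nat_mul, Real.exp_le_exp]
      have h4 : d * l ≤ f * β := by
        calc d * l = (4 * (d:ℝ) ^ 2 * s * l) * (1 / (4 * d * (s:ℝ))) := by field_simp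
          _ ≤ f * β := mul_le_mul hf1 hβ2 (by positivity) (by positivity)
      linarith
    have h5 : (q:ℝ) ^ d = Real.exp (d * l) := by
      rw [hl, Real.exp_nat_mul, Real.exp_log (by linarith)]
    calc (q:ℝ) ^ d * (1 - β) ^ f ≤ Real.exp (d * l) * Real.exp (-(d * l)) := by
          rw [h5]; gcongr
      _ = 1 := by rw [← Real.exp_add]; simp
      _ ≤ 4 * q := by linarith
  have hb := prob_bound (F := F) hd (show 0 < s by omega) f k hβ1 hf M p hp0 hp1 (by
    intro n hn
    have : ((s + d + f + k : ℕ) : ℝ) ≤ n := by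
      push_cast
      have : 0 ≤ (q:ℝ) ^ (2 / 3 : ℝ) := by positivity
      linarith
    exact_mod_cast this)
  refine hb.trans ?_
  rw [hF]
  have hch := choose_bound q k p hp0 hk0 (by linarith)
  have hkq : (q:ℝ) ^ (2 / 3 : ℝ) ≤ k / 2 := by
    have : 0 ≤ (q:ℝ) ^ (2 / 3 : ℝ) := by positivity
    linarith
  have hcount : ((q:ℝ) ^ d + 1) ^ (s + d + f) ≤ 2 ^ k := by
    have h1 : (q:ℝ) ^ d + 1 ≤ Real.exp ((d + 1) * l) := by
      have h5 : Real.exp ((d + 1) * l) = (q:ℝ) ^ (d + 1) := by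
        rw [hl, show ((d:ℝ) + 1) = ((d + 1 : ℕ) : ℝ) by push_cast; rfl, Real.exp_nat_mul,
          Real.exp_log (by linarith)]
      rw [h5, pow_succ]
      have : 1 ≤ (q:ℝ) ^ d := one_le_pow₀ (by linarith)
      nlinarith
    calc ((q:ℝ) ^ d + 1) ^ (s + d + f) ≤ Real.exp ((d + 1) * l) ^ (s + d + f) := by gcongr
      _ = Real.exp (((s:ℝ) + d + f) * ((d + 1) * l)) := by
          rw [← Real.exp_nat_mul]; push_cast; rfl
      _ ≤ Real.exp (k * Real.log 2) := by
          rw [Real.exp_le_exp]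
          have h6 : 0 ≤ (d + 1) * l := by positivity
          have h7 : (1/2 : ℝ) ≤ Real.log 2 := by linarith [Real.log_two_gt_d9]
          have h8 : (0:ℝ) ≤ k := by positivity
          nlinarith
      _ = 2 ^ k := by rw [Real.exp_nat_mul, Real.exp_log (by norm_num)]
  have hkn : n0 ≤ k := by
    have : (n0 : ℝ) ≤ k := by
      have : (0:ℝ) ≤ k := by positivity
      linarith
    exact_mod_cast this
  calc ((q:ℝ) ^ d + 1) ^ (s + d + f) * (((4 * q).choose k : ℝ) * p ^ k)
      ≤ 2 ^ k * (1 / 4) ^ k := mul_le_mul hcount hch (by positivity) (by positivity)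
    _ = (1 / 2) ^ k := by rw [← mul_pow]; norm_num
    _ ≤ (1 / 2) ^ n0 := pow_le_pow_of_le_one (by norm_num) (by norm_num) hkn
    _ ≤ δ := hn0.le

/-- Upper bounds for the largest general position subset of a
`p`-random subset of `𝔽_q^d` in the two upper ranges of `p`. -/
theorem random_turan_upper_Fqd_high_range (d : ℕ) (hd : 2 ≤ d) :
    ∃ c : ℝ, 0 < c ∧ ∀ δ : ℝ, 0 < δ → ∃ Q : ℕ, ∀ q : ℕ, Q ≤ q → IsPrimePow q →
      ∀ (F : Type) [Field F] [Fintype F], Fintype.card F = q →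
        ∀ p : ℝ, 0 ≤ p → p ≤ 1 →
          ((p ≤ (q : ℝ) ^ (-(1 : ℝ) / ((d : ℝ) + 1)) * (Real.logb 2 q) ^ 2 →
            bernoulliProb (Fin d → F) p
              (fun S => ∃ T : Finset (Fin d → F), T ⊆ S ∧ IsGenPos F d ↑T ∧
                c * (q : ℝ) ^ ((d : ℝ) / ((d : ℝ) + 1)) * (Real.logb 2 q) ^ 2
                  ≤ (T.card : ℝ)) ≤ δ) ∧
          ((q : ℝ) ^ (-(1 : ℝ) / ((d : ℝ) + 1)) * (Real.logb 2 q) ^ 2 ≤ p →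
            bernoulliProb (Fin d → F) p
              (fun S => ∃ T : Finset (Fin d → F), T ⊆ S ∧ IsGenPos F d ↑T ∧
                c * p * (q : ℝ) ≤ (T.card : ℝ)) ≤ δ)) := by
  refine ⟨100, by norm_num, fun δ hδ => ?_⟩
  obtain ⟨Q, hQ⟩ := main_bound d hd δ hδ
  refine ⟨Q, fun q hq _ F _ _ hF p hp0 hp1 => ?_⟩
  obtain ⟨hq3, hmain⟩ := hQ q hq
  have hqR : (3:ℝ) ≤ q := by exact_mod_cast hq3
  have hdR : (2:ℝ) ≤ d := by exact_mod_cast hd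
  have hlog : 1 ≤ Real.logb 2 q := by
    rw [Real.le_logb_iff_rpow_le (by norm_num) (by linarith)]
    norm_num
    linarith
  have hlog2 : 1 ≤ (Real.logb 2 q) ^ 2 := one_le_pow₀ hlog
  have hexp : (q:ℝ) ^ (2 / 3 : ℝ) ≤ (q : ℝ) ^ ((d : ℝ) / ((d : ℝ) + 1)) := by
    refine Real.rpow_le_rpow_of_exponent_le (by linarith) ?_
    rw [div_le_div_iff₀ (by norm_num) (by positivity)]
    linarith
  have hmul : (q : ℝ) ^ (-(1 : ℝ) / ((d : ℝ) + 1)) * q = (q : ℝ) ^ ((d : ℝ) / ((d : ℝ) + 1)) := by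
    nth_rewrite 2 [← Real.rpow_one (q:ℝ)]
    rw [← Real.rpow_add (by linarith)]
    congr 1
    field_simp
    ring
  have hbig : 100 * (q:ℝ) ^ (2 / 3 : ℝ) ≤
      100 * (q : ℝ) ^ ((d : ℝ) / ((d : ℝ) + 1)) * (Real.logb 2 q) ^ 2 := by
    have h0 : 0 ≤ (q : ℝ) ^ ((d : ℝ) / ((d : ℝ) + 1)) := by positivity
    nlinarith
  constructor
  · intro hp
    refine hmain F hF p _ hp0 hp1 ?_ hbig
    have := mul_le_mul_of_nonneg_right hp (show (0:ℝ) ≤ q by linarith)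
    rw [← hmul]
    linarith
  · intro hp
    refine hmain F hF p _ hp0 hp1 le_rfl (hbig.trans ?_)
    have := mul_le_mul_of_nonneg_right hp (show (0:ℝ) ≤ q by linarith)
    rw [← hmul]
    linarith
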